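/- For real numbers \gamma, \delta and a natural number j, define f_j^{\gamma,\delta}(x) = \frac{(-1)^j}{j!} \prod_{i=0}^{j-1} (x - i(\gamma+\delta+1+i)). For real \alpha, \beta, \gamma, \delta, define the Racah polynomials r_n^{\alpha,\beta,\gamma,\delta}(x) = \sum_{j=0}^n \frac{(\alpha+1+j)_{n-j} (\beta+\delta+1+j)_{n-j} (\gamma+1+j)_{n-j}}{(-1)^j (n-j)! \, (n+\alpha+\beta+1+j)_{n-j}} \, f_j^{\gamma,\delta}(x) (well defined whenever the Pochhammer symbols in the denominators are nonzero), the quadratic map \lambda^{\gamma,\delta}(x) = x(x+\gamma+\delta+1), and the normalized Casorati Racah determinant R^{\alpha,\beta,\gamma,\delta}_{n,m,x} = \det\big( r^{\alpha,\beta,\gamma,\delta}_{m+j-1}(\lambda^{\gamma,\delta}(x+i-1)) \big)_{i,j=1}^n \big/ \prod_{l=1}^{n-1} (2x+\gamma+\delta+1+l)_l. Let n, m be natural numbers and x, \alpha, \beta, \gamma, \delta real numbers such that \alpha+\beta is not an integer, \prod_{l=1}^{n-1} (2x+\gamma+\delta+1-n-m+l)_l \ne 0 and \prod_{l=1}^{m-1}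 (-2x-\gamma-\delta+1+l)_l \ne 0. Then: R^{\alpha-n-m, \, \beta-n-m, \, \gamma-n-m, \, \delta}_{n,m,x} = R^{-\alpha, \, -\beta, \, -\gamma, \, -\delta}_{m,n,-x}. -/

import Mathlib

/-- The Pochhammer symbol `(y)_l = y (y+1) ⋯ (y+l-1)`. -/
noncomputable def poch (y : ℝ) (l : ℕ) : ℝ := ∏ k ∈ Finset.range l, (y + k)

/-- The polynomial `f_j^{γ,δ}(x) = ((-1)^j/j!) ∏_{i=0}^{j-1} (x - i(γ+δ+1+i))`. -/
noncomputable def fpol (γ δ : ℝ) (j : ℕ) (x : ℝ) : ℝ :=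
  ((-1 : ℝ) ^ j / j.factorial) * ∏ i ∈ Finset.range j, (x - i * (γ + δ + 1 + i))

/-- The Racah polynomial `r_n^{α,β,γ,δ}(x)`. -/
noncomputable def racah (α β γ δ : ℝ) (n : ℕ) (x : ℝ) : ℝ :=
  ∑ j ∈ Finset.range (n + 1),
    (poch (α + 1 + j) (n - j) * poch (β + δ + 1 + j) (n - j) *
        poch (γ + 1 + j) (n - j) /
      ((-1 : ℝ) ^ j * (n - j).factorial * poch (n + α + β + 1 + j) (n - j))) *
    fpol γ δ j x

/-- The normalized Casorati Racah determinant `R^{α,β,γ,δ}_{n,m,x}`. -/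
noncomputable def racahCasorati (α β γ δ : ℝ) (n m : ℕ) (x : ℝ) : ℝ :=
  Matrix.det (Matrix.of fun i j : Fin n =>
    racah α β γ δ (m + (j : ℕ)) ((x + (i : ℕ)) * (x + (i : ℕ) + γ + δ + 1))) /
  ∏ l ∈ Finset.Icc 1 (n - 1), poch (2 * x + γ + δ + 1 + l) l

/-! On the lattice `λ`, forward differences turn the Casorati matrix of the Racah polynomials into
a matrix of divided differences, and these form an infinite unitriangular matrix `P` in which the
normalized Casorati determinant is an upper right corner minor. Let `Q` be the matrix of the dual
parameters and `K` the alternating antidiagonal matrix of size `n + m`. Reversal of Pochhammer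
symbols, the Chu–Vandermonde sum and a very-well-poised sum show `P K Qᵀ = K`, and the Jacobi
identity for complementary minors then equates the `n × n` corner of `P` with the `m × m` corner
of `Q`. -/

open Matrix
open Finset.HasAntidiagonal (antidiagonal mem_antidiagonal)

section SignedReversal

variable {R : Type*} [CommRing R]

/-- The antidiagonal matrix with alternating entries. -/
def signedReversal (R : Type*) [CommRing R] (N : ℕ) : Matrix (Fin N) (Fin N) R :=
  of fun i j => if i = j.rev then (-1) ^ (i : ℕ) else 0

lemma mul_signedReversal_apply {ι : Type*} {N : ℕ} (A : Matrix ι (Fin N) R) (i : ι) (j : Fin N) :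
    (A * signedReversal R N) i j = A i j.rev * (-1) ^ (j.rev : ℕ) := by
  simp [Matrix.mul_apply, signedReversal]

lemma det_signedReversal (N : ℕ) : (signedReversal R N).det = 1 := by
  induction N with
  | zero => simp
  | succ N ih =>
    have hminor : (signedReversal R (N + 1)).submatrix Fin.succ (Fin.last N).succAbove =
        -signedReversal R N := by
      ext i j
      simp only [signedReversal, submatrix_apply, of_apply, Matrix.neg_apply,
        Fin.succAbove_last, Fin.rev_castSucc, Fin.succ_inj, Fin.val_succ, pow_succ]
      split_ifs <;> simp
    rw [det_succ_row_zero, Finset.sum_eq_single (Fin.last N), hminor, det_neg, ih]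
    · simp [signedReversal, ← mul_pow]
    · intro j _ hj
      have : (0 : Fin (N + 1)) ≠ j.rev := by
        rwa [Ne, eq_comm, Fin.rev_eq_iff, Fin.rev_zero]
      simp [signedReversal, this]
    · simp

/-- The leading principal `N × N` submatrix of an infinite matrix. -/
def leading (N : ℕ) (A : Matrix ℕ ℕ R) : Matrix (Fin N) (Fin N) R :=
  A.submatrix Fin.val Fin.val

/-- The upper right `n × n` corner of the leading principal `(n + m) × (n + m)` submatrix. -/
def corner (n m : ℕ) (A : Matrix ℕ ℕ R) : Matrix (Fin n) (Fin n) R :=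
  A.submatrix Fin.val fun j => m + j

lemma signedReversal_castAdd_castLE {n m : ℕ} (i : Fin n) (j : Fin m) :
    signedReversal R (n + m) (i.castAdd m) (j.castLE (Nat.le_add_left m n)) = 0 := by
  refine if_neg fun h => ?_
  have := congrArg Fin.val h
  simp only [Fin.val_castAdd, Fin.val_rev, Fin.val_castLE] at this
  omega

lemma signedReversal_natAdd_castLE {n m : ℕ} (i j : Fin m) :
    signedReversal R (n + m) (i.natAdd n) (j.castLE (Nat.le_add_left m n)) =
      (-1) ^ n * signedReversal R m i j := by
  have : i.natAdd n = (j.castLE (Nat.le_add_left m n)).rev ↔ i = j.rev := by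
    simp only [Fin.ext_iff, Fin.val_natAdd, Fin.val_rev, Fin.val_castLE]
    omega
  simp [signedReversal, this, pow_add]

lemma mul_signedReversal_castAdd (A : Matrix ℕ ℕ R) {n m : ℕ} (i j : Fin n) :
    (leading (n + m) A * signedReversal R (n + m)) (i.castAdd m) (j.castAdd m) =
      (-1) ^ m * (corner n m A * signedReversal R n) i j := by
  have : n + m - (j + 1) = m + (n - (j + 1)) := by omega
  simp only [leading, mul_signedReversal_apply, submatrix_apply, Fin.val_castAdd, Fin.val_rev,
    this, pow_add, corner]
  ring

/- The Jacobi identity for complementary minors. With `K` the signed reversal and `X = P K`, the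
columns `X eₖ` for `k < n` together with the columns `X Qᵀ eⱼ = K eⱼ` for `j < m` form a block
lower triangular matrix. -/
theorem det_corner_of_mul_signedReversal_mul_transpose {n m : ℕ} {P Q : Matrix ℕ ℕ R}
    (h : leading (n + m) P * signedReversal R (n + m) * (leading (n + m) Q)ᵀ =
      signedReversal R (n + m)) :
    (corner n m P).det = (leading (n + m) P).det * (corner m n Q).det := by
  set X := leading (n + m) P * signedReversal R (n + m) with hX
  let e : Fin n ⊕ Fin m ≃ Fin (n + m) := finSumFinEquiv
  let W : Matrix (Fin n ⊕ Fin m) (Fin n ⊕ Fin m) R :=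
    fromBlocks 1 (of fun i j => Q j i) 0 (corner m n Q)ᵀ
  have hupper : (X.submatrix e e).toBlocks₁₁ =
      (-1 : R) ^ m • (corner n m P * signedReversal R n) := by
    ext i j
    exact mul_signedReversal_castAdd P i j
  have hXW : X.submatrix e e * W = fromBlocks (X.submatrix e e).toBlocks₁₁ 0
      (X.submatrix e e).toBlocks₂₁ ((-1 : R) ^ n • signedReversal R m) := by
    ext a (b | b)
    · rcases a with a | a <;>
        simp [W, Matrix.mul_apply, one_apply, toBlocks₁₁, toBlocks₂₁]
    · have hcol := congrFun₂ h (e a) (b.castLE (Nat.le_add_left m n))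
      rw [Matrix.mul_apply, ← e.sum_comp, Fintype.sum_sum_type] at hcol
      rcases a with a | a <;>
        simpa [W, e, Matrix.mul_apply, leading, corner, signedReversal_castAdd_castLE,
          signedReversal_natAdd_castLE] using hcol
  have hdet := congrArg det hXW
  rw [det_mul, det_fromBlocks_zero₂₁, det_fromBlocks_zero₁₂, det_submatrix_equiv_self, hX,
    hupper] at hdet
  simp only [det_mul, det_smul, det_signedReversal, det_one, det_transpose, Fintype.card_fin,
    mul_one, one_mul] at hdet
  have hsign : ((-1 : R) ^ m) ^ n * ((-1) ^ n) ^ m = 1 := by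
    rw [pow_right_comm, ← mul_pow, ← mul_pow]
    simp
  linear_combination -hdet - (corner n m P).det * hsign

end SignedReversal

section UpperTriangular

variable {R : Type*} [CommRing R]

/-- The infinite upper triangular matrix whose row `i` reads `f i 0, f i 1, …` from the diagonal
on. -/
def upperTriangular (f : ℕ → ℕ → R) : Matrix ℕ ℕ R :=
  of fun i j => if i ≤ j then f i (j - i) else 0

lemma upperTriangular_add (f : ℕ → ℕ → R) (i d : ℕ) : upperTriangular f i (i + d) = f i d := by
  simp [upperTriangular]

lemma upperTriangular_of_lt (f : ℕ → ℕ → R) {i j : ℕ} (h : j < i) : upperTriangular f i j = 0 := by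
  simp [upperTriangular, h]

lemma det_leading_upperTriangular (N : ℕ) {f : ℕ → ℕ → R} (hf : ∀ i, f i 0 = 1) :
    (leading N (upperTriangular f)).det = 1 := by
  have htri : (leading N (upperTriangular f)).IsUpperTriangular :=
    fun _ _ h => upperTriangular_of_lt f h
  rw [det_of_isUpperTriangular htri]
  simp [leading, upperTriangular, hf]

lemma sum_fin_eq_sum_antidiagonal {M : Type*} [AddCommMonoid M] {N i d : ℕ} (h : i + d < N)
    (F : ℕ → M) (hlt : ∀ k < i, F k = 0) (hgt : ∀ k < N, i + d < k → F k = 0) :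
    ∑ k : Fin N, F k = ∑ p ∈ antidiagonal d, F (i + p.1) := by
  rw [Fin.sum_univ_eq_sum_range, Finset.Nat.sum_antidiagonal_eq_sum_range_succ_mk,
    ← Nat.add_sub_cancel_left (n := i) (m := d.succ), ← Finset.sum_Ico_eq_sum_range]
  refine (Finset.sum_subset (fun k => ?_) fun k hk hk' => ?_).symm
  · simp only [Finset.mem_Ico, Finset.mem_range]
    omega
  · rw [Finset.mem_range] at hk
    rw [Finset.mem_Ico, not_and_or, not_le, not_lt] at hk'
    exact hk'.elim (hlt k) fun hk' => hgt k hk (by omega)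

/-- The entries of the product of two upper triangular matrices, in the indexing of
`upperTriangular`. -/
def triangularMul (f g : ℕ → ℕ → R) (i d : ℕ) : R :=
  ∑ p ∈ antidiagonal d, f i p.1 * g (i + p.1) p.2

lemma leading_upperTriangular_triangularMul (N : ℕ) (f g : ℕ → ℕ → R) :
    leading N (upperTriangular (triangularMul f g)) =
      leading N (upperTriangular f) * leading N (upperTriangular g) := by
  ext ⟨i, hi⟩ ⟨j, hj⟩
  simp only [leading, submatrix_apply, Matrix.mul_apply]
  rcases le_or_gt i j with h | h
  · obtain ⟨d, rfl⟩ := Nat.exists_eq_add_of_le h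
    rw [upperTriangular_add, sum_fin_eq_sum_antidiagonal hj
      (fun k => upperTriangular f i k * upperTriangular g k (i + d))]
    · refine Finset.sum_congr rfl fun p hp => ?_
      rw [← mem_antidiagonal.mp hp, ← add_assoc, upperTriangular_add, upperTriangular_add]
    · exact fun k hk => by rw [upperTriangular_of_lt f hk, zero_mul]
    · exact fun k _ hk => by rw [upperTriangular_of_lt g hk, mul_zero]
  · rw [upperTriangular_of_lt _ h, Finset.sum_eq_zero fun k _ => ?_]
    rcases lt_or_ge (k : ℕ) i with hk | hk
    · rw [upperTriangular_of_lt f hk, zero_mul]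
    · rw [upperTriangular_of_lt g (h.trans_le hk), mul_zero]

lemma mul_signedReversal_mul_transpose_apply {N : ℕ} (A B : Matrix ℕ ℕ R) (i j : Fin N) :
    (leading N A * signedReversal R N * (leading N B)ᵀ) i j =
      ∑ k : Fin N, (-1) ^ (k : ℕ) * (A i k * B j (N - 1 - k)) := by
  rw [Matrix.mul_apply, ← Equiv.sum_comp Fin.revPerm]
  refine Finset.sum_congr rfl fun k _ => ?_
  simp only [leading, Fin.revPerm_apply, mul_signedReversal_apply, Fin.rev_rev, submatrix_apply,
    transpose_apply, Fin.val_rev, Nat.sub_sub, add_comm 1]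
  ring

lemma mul_signedReversal_mul_transpose_of_sum_antidiagonal {N : ℕ} {f g : ℕ → ℕ → R}
    (h : ∀ i j d, i + j + d + 1 = N →
      ∑ p ∈ antidiagonal d, (-1) ^ p.1 * (f i p.1 * g j p.2) = if d = 0 then 1 else 0) :
    leading N (upperTriangular f) * signedReversal R N * (leading N (upperTriangular g))ᵀ =
      signedReversal R N := by
  ext ⟨i, hi⟩ ⟨j, hj⟩
  rw [mul_signedReversal_mul_transpose_apply]
  rcases lt_or_ge (i + j) N with hij | hij
  · obtain ⟨d, rfl⟩ := Nat.exists_eq_add_of_lt hij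
    rw [sum_fin_eq_sum_antidiagonal (i := i) (d := d) (by omega)
      (fun k => (-1) ^ k * (upperTriangular f i k * upperTriangular g j (i + j + d + 1 - 1 - k)))]
    · have hterm : ∀ p ∈ antidiagonal d, (-1) ^ (i + p.1) * (upperTriangular f i (i + p.1) *
          upperTriangular g j (i + j + d + 1 - 1 - (i + p.1))) =
          (-1) ^ i * ((-1) ^ p.1 * (f i p.1 * g j p.2)) := fun p hp => by
        have : i + j + d + 1 - 1 - (i + p.1) = j + p.2 := by
          have := mem_antidiagonal.mp hp
          omega
        rw [this, upperTriangular_add, upperTriangular_add, pow_add, mul_assoc]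
      have hcorner : i = i + j + d - j ↔ d = 0 := by omega
      rw [Finset.sum_congr rfl hterm, ← Finset.mul_sum, h i j d rfl]
      simp [signedReversal, Fin.ext_iff, hcorner]
    · exact fun k hk => by rw [upperTriangular_of_lt f hk, zero_mul, mul_zero]
    · exact fun k _ hk => by rw [upperTriangular_of_lt g (by omega), mul_zero, mul_zero]
  · have : i ≠ N - (j + 1) := by omega
    rw [Finset.sum_eq_zero fun k _ => ?_]
    · simp [signedReversal, Fin.ext_iff, this]
    · rcases lt_or_ge (k : ℕ) i with hk | hk
      · rw [upperTriangular_of_lt f hk, zero_mul, mul_zero]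
      · have hk' : N - 1 - k < j := by omega
        rw [upperTriangular_of_lt g hk', mul_zero, mul_zero]

end UpperTriangular

section Pochhammer

lemma poch_zero (y : ℝ) : poch y 0 = 1 :=
  Finset.prod_range_zero _

lemma poch_succ (y : ℝ) (l : ℕ) : poch y (l + 1) = poch y l * (y + l) :=
  Finset.prod_range_succ _ l

lemma poch_add (y : ℝ) (k l : ℕ) : poch y (k + l) = poch y k * poch (y + k) l := by
  simp [poch, Finset.prod_range_add, add_assoc]

lemma poch_succ_left (y : ℝ) (l : ℕ) : poch y (l + 1) = y * poch (y + 1) l := by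
  rw [add_comm l, poch_add, poch_succ, poch_zero]
  simp

lemma poch_one_sub_sub (y : ℝ) (l : ℕ) : poch (1 - y - l) l = (-1) ^ l * poch y l := by
  induction l with
  | zero => simp [poch_zero]
  | succ l ih =>
    have : 1 - y - (l + 1 : ℕ) + 1 = 1 - y - l := by push_cast; ring
    rw [poch_succ_left, this, ih, poch_succ]
    push_cast
    ring

lemma poch_mul_poch_one_sub_sub (y : ℝ) (k l : ℕ) :
    poch y k * poch (1 - y - (k + l : ℕ)) l = (-1) ^ l * poch y (k + l) := by
  have : 1 - y - (k + l : ℕ) = 1 - (y + k) - l := by push_cast; ring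
  rw [this, poch_one_sub_sub, poch_add]
  ring

lemma poch_ne_zero {y : ℝ} {l : ℕ} (h : ∀ k < l, y + k ≠ 0) : poch y l ≠ 0 :=
  Finset.prod_ne_zero_iff.mpr fun k hk => h k (Finset.mem_range.mp hk)

end Pochhammer

section Summation

lemma ring_choose_succ_mul {R : Type*} [CommRing R] [BinomialRing R] (x : R) (k : ℕ) :
    Ring.choose x (k + 1) * (k + 1) = Ring.choose x k * (x - k) := by
  simpa [mul_comm] using Ring.choose_smul_choose x (Nat.le_succ k)

lemma sum_antidiagonal_ring_choose_mul_ring_choose_neg {R : Type*} [CommRing R] [BinomialRing R]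
    (x : R) (d : ℕ) :
    ∑ p ∈ antidiagonal d, Ring.choose x p.1 * Ring.choose (-x) p.2 = if d = 0 then 1 else 0 := by
  rw [← Ring.add_choose_eq d (Commute.all _ _), add_neg_cancel, Ring.choose_zero_ite]

theorem sum_antidiagonal_choose_mul_poch (x y : ℝ) (d : ℕ) :
    ∑ p ∈ antidiagonal d, (-1) ^ p.1 * (Ring.choose x p.1 * poch y p.1 *
      (Ring.choose (-x) p.2 * poch (1 - y - d) p.2)) = if d = 0 then 1 else 0 := by
  have hterm : ∀ p ∈ antidiagonal d, (-1) ^ p.1 * (Ring.choose x p.1 * poch y p.1 *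
      (Ring.choose (-x) p.2 * poch (1 - y - d) p.2)) =
      (-1) ^ d * poch y d * (Ring.choose x p.1 * Ring.choose (-x) p.2) := fun p hp => by
    rw [← mem_antidiagonal.mp hp]
    linear_combination (-1) ^ p.1 * Ring.choose x p.1 * Ring.choose (-x) p.2 *
      poch_mul_poch_one_sub_sub y p.1 p.2
  rw [Finset.sum_congr rfl hterm, ← Finset.mul_sum,
    sum_antidiagonal_ring_choose_mul_ring_choose_neg]
  rcases eq_or_ne d 0 with rfl | hd
  · simp [poch_zero]
  · simp [hd]

/-- The general term `(-1)^u (c + 2u + 1) / (u! v! (c + u + 1)_{u + v + 1})` of a very-well-poised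
sum, with the factor `c + 2u + 1` cancelled so that it may vanish. -/
noncomputable def wellPoisedTerm (c : ℝ) (u v : ℕ) : ℝ :=
  (-1) ^ u / (u.factorial * v.factorial * poch (c + u + 1) u * poch (c + 2 * u + 2) v)

lemma wellPoisedTerm_succ_succ {c : ℝ} {u v : ℕ} (h : c + 2 * u + 3 ≠ 0) :
    wellPoisedTerm c (u + 1) (v + 1) = (-1) ^ (u + 1) * (c + 2 * u + 3) /
      ((u + 1).factorial * (v + 1).factorial * poch (c + u + 2) (u + v + 3)) := by
  have hsplit : poch (c + u + 2) (u + v + 3) =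
      poch (c + (u + 1 : ℕ) + 1) (u + 1) * (c + 2 * u + 3) *
        poch (c + 2 * (u + 1 : ℕ) + 2) (v + 1) := by
    rw [show u + v + 3 = u + 1 + 1 + (v + 1) by ring, poch_add, poch_succ]
    push_cast
    ring_nf
  rw [wellPoisedTerm, hsplit]
  field_simp

lemma sum_range_wellPoisedTerm (c : ℝ) (u v : ℕ)
    (hc : ∀ t : ℕ, 2 ≤ t → t ≤ 2 * (u + v + 1) → c + t ≠ 0) :
    ∑ w ∈ Finset.range (u + 1), wellPoisedTerm c w (u + v + 1 - w) =
      (-1) ^ u / ((u + v + 1) * u.factorial * v.factorial * poch (c + u + 2) (u + v + 1)) := by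
  induction u generalizing v with
  | zero => simp [wellPoisedTerm, poch_zero, Nat.factorial_succ]
  | succ u ih =>
    have hne (t : ℕ) (y : ℝ) (hy : c + t = y) (ht : 2 ≤ t) (ht' : t ≤ 2 * (u + v + 2)) :
        y ≠ 0 := hy ▸ hc t ht (by omega)
    have hinit : c + u + 2 ≠ 0 := hne (u + 2) _ (by push_cast; ring) (by omega) (by omega)
    have hmid : c + 2 * u + 3 ≠ 0 := hne (2 * u + 3) _ (by push_cast; ring) (by omega) (by omega)
    have hlast : c + 2 * u + v + 4 ≠ 0 :=
      hne (2 * u + v + 4) _ (by push_cast; ring) (by omega) (by omega)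
    have hfull : poch (c + u + 2) (u + v + 3) ≠ 0 := poch_ne_zero fun k hk =>
      hne (u + 2 + k) _ (by push_cast; ring) (by omega) (by omega)
    have hdropLast : poch (c + u + 2) (u + (v + 1) + 1) =
        poch (c + u + 2) (u + v + 3) / (c + 2 * u + v + 4) := by
      rw [eq_div_iff hlast, poch_succ _ (u + v + 2)]
      push_cast
      ring_nf
    have hdropInit : poch (c + (u + 1 : ℕ) + 2) (u + 1 + v + 1) =
        poch (c + u + 2) (u + v + 3) / (c + u + 2) := by
      rw [eq_div_iff hinit, poch_succ_left _ (u + v + 2)]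
      push_cast
      ring_nf
    have hprev := ih (v + 1) fun t ht ht' => hc t ht (by omega)
    rw [show u + (v + 1) + 1 = u + 1 + v + 1 by ring] at hprev hdropLast
    rw [Finset.sum_range_succ, hprev, show u + 1 + v + 1 - (u + 1) = v + 1 by omega,
      wellPoisedTerm_succ_succ hmid, hdropInit, hdropLast, Nat.factorial_succ, Nat.factorial_succ]
    push_cast
    field_simp
    ring

theorem sum_antidiagonal_wellPoisedTerm (c : ℝ) (d : ℕ)
    (hc : ∀ t : ℕ, 2 ≤ t → t ≤ 2 * d → c + t ≠ 0) :
    ∑ p ∈ antidiagonal d, wellPoisedTerm c p.1 p.2 = if d = 0 then 1 else 0 := by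
  rcases d with _ | d
  · simp [wellPoisedTerm, poch_zero]
  · have hpartial := sum_range_wellPoisedTerm c d 0 hc
    rw [add_zero] at hpartial
    rw [Finset.Nat.sum_antidiagonal_eq_sum_range_succ_mk, Finset.sum_range_succ, hpartial]
    have : c + d + 2 = c + (d + 1 : ℕ) + 1 := by push_cast; ring
    simp only [wellPoisedTerm, this, Nat.factorial_succ, tsub_self, poch_zero, pow_succ]
    push_cast
    ring

end Summation

section Differences

/-- On the lattice `λ(x) = x (x + s)`, `k!` times the divided difference at `λ(x), …, λ(x + k)` of
the Newton basis polynomial `∏_{i < k + d} (t - λ(i)) / (k + d)!`. -/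
noncomputable def newtonCoeff (s x : ℝ) (k d : ℕ) : ℝ :=
  Ring.choose x d * poch (x + s + k) d

/-- The coefficient of the `j`-th Newton basis polynomial in the Racah polynomial of degree
`j + d`; the sign `(-1)^j` in `racah` cancels against the one in `fpol`. -/
noncomputable def racahCoeff (α β γ δ : ℝ) (j d : ℕ) : ℝ :=
  poch (α + 1 + j) d * poch (β + δ + 1 + j) d * poch (γ + 1 + j) d /
    (d.factorial * poch (d + 2 * j + α + β + 1) d)

/-- At `k`, `d`: `k!` times the divided difference of the Racah polynomial of degree `k + d` at the
lattice points of `x, x + 1, …, x + k`. -/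
noncomputable def racahDifference (α β γ δ x : ℝ) : ℕ → ℕ → ℝ :=
  triangularMul (newtonCoeff (γ + δ + 1) x) (racahCoeff α β γ δ)

lemma newtonCoeff_zero_right (s x : ℝ) (k : ℕ) : newtonCoeff s x k 0 = 1 := by
  simp [newtonCoeff, poch_zero]

lemma racahCoeff_zero_right (α β γ δ : ℝ) (j : ℕ) : racahCoeff α β γ δ j 0 = 1 := by
  simp [racahCoeff, poch_zero]

lemma fpol_eq_newtonCoeff (γ δ y : ℝ) (j : ℕ) :
    fpol γ δ j (y * (y + γ + δ + 1)) = (-1) ^ j * newtonCoeff (γ + δ + 1) y 0 j := by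
  induction j with
  | zero => simp [fpol, newtonCoeff, poch_zero]
  | succ j ih =>
    have hrec : (j + 1) * fpol γ δ (j + 1) (y * (y + γ + δ + 1)) =
        -fpol γ δ j (y * (y + γ + δ + 1)) * ((y - j) * (y + (γ + δ + 1) + j)) := by
      rw [fpol, fpol, Finset.prod_range_succ, Nat.factorial_succ]
      push_cast
      field_simp
      ring
    have hj : (j + 1 : ℝ) ≠ 0 := by positivity
    refine mul_left_cancel₀ hj ?_
    rw [hrec, ih, newtonCoeff, newtonCoeff, poch_succ]
    push_cast
    linear_combination (-1) ^ j * poch (y + (γ + δ + 1) + 0) j * (y + (γ + δ + 1) + j) *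
      ring_choose_succ_mul y j

theorem racah_eq_upperTriangular (α β γ δ y : ℝ) (p : ℕ) :
    racah α β γ δ p (y * (y + γ + δ + 1)) = upperTriangular (racahDifference α β γ δ y) 0 p := by
  have hrow : upperTriangular (racahDifference α β γ δ y) 0 p = racahDifference α β γ δ y 0 p := by
    simp [upperTriangular]
  rw [hrow, racah, racahDifference, triangularMul,
    Finset.Nat.sum_antidiagonal_eq_sum_range_succ_mk]
  refine Finset.sum_congr rfl fun j hj => ?_
  have hdenom : (p + α + β + 1 + j : ℝ) = (p - j : ℕ) + 2 * j + α + β + 1 := by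
    rw [Nat.cast_sub (Finset.mem_range_succ_iff.mp hj)]
    ring
  have hsign : (-1 : ℝ) ^ j ≠ 0 := by simp
  rw [fpol_eq_newtonCoeff, racahCoeff, hdenom, zero_add]
  field_simp

lemma newtonCoeff_add_one (s x : ℝ) (k d : ℕ) :
    newtonCoeff s (x + 1) k (d + 1) =
      newtonCoeff s x k (d + 1) + (2 * x + s + k + 1) * newtonCoeff s x (k + 1) d := by
  have hshift : x + 1 + s + k = x + s + k + 1 := by ring
  have hshift' : x + s + (k + 1 : ℕ) = x + s + k + 1 := by push_cast; ring
  rw [newtonCoeff, newtonCoeff, newtonCoeff, Ring.choose_succ_succ, hshift, hshift', poch_succ,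
    poch_succ_left]
  linear_combination poch (x + s + k + 1) d * ring_choose_succ_mul x d

lemma racahDifference_add_one (α β γ δ x : ℝ) (k d : ℕ) :
    racahDifference α β γ δ (x + 1) k (d + 1) = racahDifference α β γ δ x k (d + 1) +
      (2 * x + (γ + δ + 1) + k + 1) * racahDifference α β γ δ x (k + 1) d := by
  simp only [racahDifference, triangularMul, Finset.Nat.sum_antidiagonal_succ, newtonCoeff_add_one,
    newtonCoeff_zero_right, Finset.mul_sum, add_assoc, ← Finset.sum_add_distrib]
  congr 1
  refine Finset.sum_congr rfl fun p _ => ?_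
  rw [add_comm 1 p.1]
  ring

lemma upperTriangular_racahDifference_add_one (α β γ δ x : ℝ) (k p : ℕ) :
    upperTriangular (racahDifference α β γ δ (x + 1)) k p =
      upperTriangular (racahDifference α β γ δ x) k p +
        (2 * x + (γ + δ + 1) + k + 1) *
          upperTriangular (racahDifference α β γ δ x) (k + 1) p := by
  rcases lt_trichotomy p k with h | rfl | h
  · rw [upperTriangular_of_lt _ h, upperTriangular_of_lt _ h,
      upperTriangular_of_lt _ (h.trans k.lt_succ_self), mul_zero, add_zero]
  · rw [upperTriangular_of_lt _ p.lt_succ_self, mul_zero, add_zero]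
    simp [upperTriangular, racahDifference, triangularMul, newtonCoeff_zero_right]
  · obtain ⟨d, rfl⟩ := Nat.exists_eq_add_of_lt h
    rw [add_assoc k, upperTriangular_add, upperTriangular_add, racahDifference_add_one,
      show k + (d + 1) = k + 1 + d by ring, upperTriangular_add]

end Differences

section Casorati

lemma newton_expansion {s : ℝ} {P : ℕ → ℝ → ℝ}
    (hP : ∀ k y, P k (y + 1) = P k y + (2 * y + s + k + 1) * P (k + 1) y)
    {i n : ℕ} (hi : i < n) (x : ℝ) :
    P 0 (x + i) = ∑ k ∈ Finset.range n, i.choose k * poch (2 * x + s + i) k * P k x := by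
  induction i generalizing x with
  | zero =>
    rw [Finset.sum_eq_single_of_mem 0 (Finset.mem_range.mpr hi)]
    · simp [poch_zero]
    · intro k _ hk
      simp [Nat.choose_eq_zero_of_lt (Nat.pos_of_ne_zero hk)]
  | succ i ih =>
    obtain ⟨n, rfl⟩ : ∃ k, n = k + 1 := ⟨n - 1, by omega⟩
    have hlast : i.choose n = 0 := Nat.choose_eq_zero_of_lt (by omega)
    have hcoeff : ∀ k : ℕ, i.choose (k + 1) * poch (2 * (x + 1) + s + i) (k + 1) +
        i.choose k * poch (2 * (x + 1) + s + i) k * (2 * x + s + k + 1) =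
        (i + 1).choose (k + 1) * poch (2 * x + s + (i + 1 : ℕ)) (k + 1) := fun k => by
      have hchoose := ring_choose_succ_mul (i : ℝ) k
      have hshift : 2 * x + s + (i + 1 : ℕ) + 1 = 2 * (x + 1) + s + i := by push_cast; ring
      rw [Ring.choose_natCast, Ring.choose_natCast] at hchoose
      rw [poch_succ, poch_succ_left (2 * x + s + (i + 1 : ℕ)), hshift, Nat.choose_succ_succ]
      push_cast
      linear_combination poch (2 * (x + 1) + s + i) k * hchoose
    calc P 0 (x + (i + 1 : ℕ))
      _ = P 0 (x + 1 + i) := by push_cast; ring_nf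
      _ = ∑ k ∈ Finset.range (n + 1), i.choose k * poch (2 * (x + 1) + s + i) k * P k x +
          ∑ k ∈ Finset.range (n + 1), i.choose k * poch (2 * (x + 1) + s + i) k *
            (2 * x + s + k + 1) * P (k + 1) x := by
        rw [ih (by omega), ← Finset.sum_add_distrib]
        exact Finset.sum_congr rfl fun k _ => by rw [hP]; ring
      _ = _ := by
        rw [Finset.sum_range_succ', Finset.sum_range_succ _ n, Finset.sum_range_succ',
          add_right_comm, ← add_assoc, ← Finset.sum_add_distrib]
        simp only [← add_mul, hcoeff, hlast]
        simp [poch_zero]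

lemma det_eq_prod_mul_det_corner {s : ℝ} {A : ℝ → Matrix ℕ ℕ ℝ}
    (hA : ∀ y k p, A (y + 1) k p = A y k p + (2 * y + s + k + 1) * A y (k + 1) p)
    (n m : ℕ) (x : ℝ) :
    (of fun i j : Fin n => A (x + (i : ℕ)) 0 (m + j)).det =
      (∏ l ∈ Finset.range n, poch (2 * x + s + l) l) * (corner n m (A x)).det := by
  let L : Matrix (Fin n) (Fin n) ℝ :=
    of fun i k => (i : ℕ).choose k * poch (2 * x + s + (i : ℕ)) k
  have hmul : (of fun i j : Fin n => A (x + (i : ℕ)) 0 (m + j)) = L * corner n m (A x) := by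
    ext i j
    simp only [L, corner, of_apply, submatrix_apply, Matrix.mul_apply]
    rw [newton_expansion (P := fun k y => A y k (m + j)) (fun k y => hA y k _) i.isLt,
      Finset.sum_range]
  have hL : L.IsLowerTriangular := fun i k hik => by
    simp [L, Nat.choose_eq_zero_of_lt (show (i : ℕ) < k from hik)]
  rw [hmul, det_mul, det_of_isLowerTriangular L hL, Finset.prod_range]
  simp [L]

lemma prod_Icc_poch (y : ℝ) (n : ℕ) :
    ∏ l ∈ Finset.Icc 1 (n - 1), poch (y + l) l = ∏ l ∈ Finset.range n, poch (y + l) l := by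
  rcases n with _ | n
  · simp
  · rw [Finset.prod_range_succ', poch_zero, mul_one, Nat.add_sub_cancel,
      ← Finset.Ico_add_one_right_eq_Icc, Finset.prod_Ico_eq_prod_range]
    simp [add_comm]

theorem racahCasorati_eq_det_corner {α β γ δ : ℝ} {n : ℕ} {x : ℝ}
    (h : ∏ l ∈ Finset.Icc 1 (n - 1), poch (2 * x + γ + δ + 1 + l) l ≠ 0) (m : ℕ) :
    racahCasorati α β γ δ n m x =
      (corner n m (upperTriangular (racahDifference α β γ δ x))).det := by
  rw [racahCasorati, div_eq_iff h, prod_Icc_poch, mul_comm]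
  simp only [racah_eq_upperTriangular]
  simp only [add_assoc _ γ, add_assoc _ (γ + δ)]
  exact det_eq_prod_mul_det_corner (A := fun y => upperTriangular (racahDifference α β γ δ y))
    (upperTriangular_racahDifference_add_one α β γ δ) n m x

end Casorati

section Duality

lemma newtonCoeff_duality {s s' x : ℝ} {N : ℕ} (hs : s' = 2 - s - N) :
    leading N (upperTriangular (newtonCoeff s x)) * signedReversal ℝ N *
      (leading N (upperTriangular (newtonCoeff s' (-x))))ᵀ = signedReversal ℝ N := by
  refine mul_signedReversal_mul_transpose_of_sum_antidiagonal fun i j d hN => ?_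
  have hj : -x + s' + j = 1 - (x + s + i) - d := by
    rw [hs, ← hN]
    push_cast
    ring
  simp only [newtonCoeff, hj, sum_antidiagonal_choose_mul_poch]

lemma racahCoeff_mul_racahCoeff {α β γ δ : ℝ} {i j u v d N : ℕ} (hd : u + v = d)
    (hN : i + j + d + 1 = N) :
    (-1) ^ u * (racahCoeff (α - N) (β - N) (γ - N) δ i u * racahCoeff (-α) (-β) (-γ) (-δ) j v) =
      poch (α - N + 1 + i) d * poch (β - N + δ + 1 + i) d * poch (γ - N + 1 + i) d *
        wellPoisedTerm (α + β - 2 * N + 2 * i) u v := by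
  subst hd
  have hdual (a b : ℝ) (hab : a + b = 2 + i + j - N) :
      poch a u * poch b v = (-1) ^ v * poch a (u + v) := by
    have : b = 1 - a - (u + v : ℕ) := by
      rw [eq_sub_of_add_eq' hab, ← hN]
      push_cast
      ring
    rw [this, poch_mul_poch_one_sub_sub]
  have hα := hdual (α - N + 1 + i) (-α + 1 + j) (by ring)
  have hβ := hdual (β - N + δ + 1 + i) (-β + -δ + 1 + j) (by ring)
  have hγ := hdual (γ - N + 1 + i) (-γ + 1 + j) (by ring)
  have hleft : u + 2 * i + (α - N) + (β - N) + 1 = α + β - 2 * N + 2 * i + u + 1 := by ring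
  have hright : poch (v + 2 * j + -α + -β + 1) v =
      (-1) ^ v * poch (α + β - 2 * N + 2 * i + 2 * u + 2) v := by
    rw [← poch_one_sub_sub, ← hN]
    push_cast
    ring_nf
  rw [racahCoeff, racahCoeff, wellPoisedTerm, hleft, hright, div_mul_div_comm,
    mul_mul_mul_comm _ (poch (γ - N + 1 + i) u), mul_mul_mul_comm (poch (α - N + 1 + i) u), hα, hβ,
    hγ]
  rcases neg_one_pow_eq_or ℝ v with hv | hv <;> simp only [hv] <;> ring

theorem racahCoeff_duality (γ δ : ℝ) {α β : ℝ} {N : ℕ}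
    (h : ∀ k : ℕ, 2 ≤ k → k ≤ 2 * (N - 1) → α + β ≠ k) :
    leading N (upperTriangular (racahCoeff (α - N) (β - N) (γ - N) δ)) * signedReversal ℝ N *
      (leading N (upperTriangular (racahCoeff (-α) (-β) (-γ) (-δ))))ᵀ = signedReversal ℝ N := by
  refine mul_signedReversal_mul_transpose_of_sum_antidiagonal fun i j d hN => ?_
  rw [Finset.sum_congr rfl fun p hp => racahCoeff_mul_racahCoeff (mem_antidiagonal.mp hp) hN,
    ← Finset.mul_sum, sum_antidiagonal_wellPoisedTerm]
  · rcases eq_or_ne d 0 with rfl | hd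
    · simp [poch_zero]
    · simp [hd]
  · intro t ht htd hc
    subst hN
    refine h (2 * (j + d + 1) - t) (by omega) (by omega) ?_
    rw [Nat.cast_sub (by omega)]
    push_cast at hc ⊢
    linear_combination hc

theorem racahDifference_duality {α β : ℝ} (γ δ x : ℝ) {N : ℕ}
    (h : ∀ k : ℕ, 2 ≤ k → k ≤ 2 * (N - 1) → α + β ≠ k) :
    leading N (upperTriangular (racahDifference (α - N) (β - N) (γ - N) δ x)) *
      signedReversal ℝ N *
      (leading N (upperTriangular (racahDifference (-α) (-β) (-γ) (-δ) (-x))))ᵀ =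
      signedReversal ℝ N := by
  have hs : -γ + -δ + 1 = 2 - (γ - N + δ + 1) - N := by ring
  rw [racahDifference, racahDifference, leading_upperTriangular_triangularMul,
    leading_upperTriangular_triangularMul, transpose_mul]
  generalize hA : leading N (upperTriangular (newtonCoeff (γ - N + δ + 1) x)) = A
  generalize hA' : (leading N (upperTriangular (newtonCoeff (-γ + -δ + 1) (-x))))ᵀ = A'
  generalize hB : leading N (upperTriangular (racahCoeff (α - N) (β - N) (γ - N) δ)) = B
  generalize hB' : (leading N (upperTriangular (racahCoeff (-α) (-β) (-γ) (-δ))))ᵀ = B'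
  calc A * B * signedReversal ℝ N * (B' * A')
    _ = A * (B * signedReversal ℝ N * B') * A' := by simp only [Matrix.mul_assoc]
    _ = A * signedReversal ℝ N * A' := by rw [← hB, ← hB', racahCoeff_duality γ δ h]
    _ = signedReversal ℝ N := by rw [← hA, ← hA', newtonCoeff_duality hs]

lemma det_leading_racahDifference (α β γ δ x : ℝ) (N : ℕ) :
    (leading N (upperTriangular (racahDifference α β γ δ x))).det = 1 :=
  det_leading_upperTriangular N fun i => by
    simp [racahDifference, triangularMul, newtonCoeff_zero_right, racahCoeff_zero_right]

end Duality

/-- The excluded values of `α + β` are the zeros of the denominators of the polynomials involved. -/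
theorem racah_casorati_symmetry_general (n m : ℕ) (x α β γ δ : ℝ)
    (hαβ : ∀ k : ℕ, 2 ≤ k → k ≤ 2 * (n + m - 1) → α + β ≠ k)
    (h1 : (∏ l ∈ Finset.Icc 1 (n - 1),
      poch (2 * x + γ + δ + 1 - n - m + l) l) ≠ 0)
    (h2 : (∏ l ∈ Finset.Icc 1 (m - 1),
      poch (-(2 * x) - γ - δ + 1 + l) l) ≠ 0) :
    racahCasorati (α - n - m) (β - n - m) (γ - n - m) δ n m x
    = racahCasorati (-α) (-β) (-γ) (-δ) m n (-x) := by
  have hleft : ∏ l ∈ Finset.Icc 1 (n - 1), poch (2 * x + (γ - n - m) + δ + 1 + l) l ≠ 0 := by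
    convert h1 using 4
    ring
  have hright : ∏ l ∈ Finset.Icc 1 (m - 1), poch (2 * -x + -γ + -δ + 1 + l) l ≠ 0 := by
    convert h2 using 4
    ring
  have hdual := racahDifference_duality γ δ x hαβ
  rw [racahCasorati_eq_det_corner hleft, racahCasorati_eq_det_corner hright]
  simp only [sub_sub, ← Nat.cast_add]
  rw [det_corner_of_mul_signedReversal_mul_transpose hdual, det_leading_racahDifference, one_mul]

/-- the symmetry of normalized Casorati determinants of Racah
polynomials. -/
theorem racah_casorati_symmetry (n m : ℕ) (x α β γ δ : ℝ)
    (hαβ : ∀ z : ℤ, α + β ≠ (z : ℝ))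
    (h1 : (∏ l ∈ Finset.Icc 1 (n - 1),
      poch (2 * x + γ + δ + 1 - n - m + l) l) ≠ 0)
    (h2 : (∏ l ∈ Finset.Icc 1 (m - 1),
      poch (-(2 * x) - γ - δ + 1 + l) l) ≠ 0) :
    racahCasorati (α - n - m) (β - n - m) (γ - n - m) δ n m x
    = racahCasorati (-α) (-β) (-γ) (-δ) m n (-x) :=
  racah_casorati_symmetry_general n m x α β γ δ (fun k _ _ => mod_cast hαβ k) h1 h2
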